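/- Let k ≥ 2 and let α = (k−1)(k−2)⋯1·0 be the word obtained by concatenating the letters of Σ_k in decreasing order. For every integer n ≥ 1, the word α^n (the n-fold concatenation of α, of length kn) is the Burrows–Wheeler transform of some necklace if and only if kn+1 is prime and k is a primitive root modulo kn+1 (i.e., the multiplicative order of k modulo kn+1 equals kn). -/

import Mathlib

/-!
The word `v = αⁿ` has a standard permutation `π` whose inverse `ρ` is, after shifting the positions
`0, …, kn - 1` to `1, …, kn`, multiplication by `k` modulo `kn + 1` (`shiftMul`,
`shiftMul_cast`).

If `v = bwt u`, then no two neighbouring letters of `v` agree, so the sorted rotations of `u` are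
pairwise distinct. Prepending the last letter to two rotations compares them first by that letter
and then as before, so the map sending a rank `m` to the rank of the rotation starting one place
earlier is strictly increasing in `(v m, m)`; hence it is `π`
(`sortPerm_shiftMul`). Since the shift of starting positions is a single cycle, so is `ρ`, and every
nonzero residue modulo `kn + 1` is a power of `k`. This forces `kn + 1` to be prime and `k` to be a
primitive root.

Conversely, if `k` has order `kn`, then `j ↦ kʲ mod (kn + 1)`, lowered by one, is a bijection of the
positions conjugating the cyclic shift to `ρ`. The word `u j = ((kʲ mod (kn + 1)) - 1) / n` has its
rotations sorted by this bijection, and reading off the last letters gives `v`.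
-/


/-- The cyclic rotation of the word `w` of length `n` starting at position `j`. -/
def rotl {n k : ℕ} (w : Fin n → Fin k) (j : Fin n) : Fin n → Fin k :=
  fun i => w (i + j)

/-- Lexicographic order on words of the same length. -/
def LexLe {n k : ℕ} (f g : Fin n → Fin k) : Prop :=
  f = g ∨ ∃ i : Fin n, (∀ j : Fin n, j < i → f j = g j) ∧ f i < g i

instance {n k : ℕ} (f g : Fin n → Fin k) : Decidable (LexLe f g) := by
  unfold LexLe; infer_instance

/-- The starting positions of the `n` cyclic rotations of `w`, listed so that the
corresponding rotations are in ascending lexicographic order (with multiplicity). -/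
def sortedRot {n k : ℕ} (w : Fin n → Fin k) : List (Fin n) :=
  (List.finRange n).mergeSort fun a b => decide (LexLe (rotl w a) (rotl w b))

lemma length_sortedRot {n k : ℕ} (w : Fin n → Fin k) : (sortedRot w).length = n := by
  simp [sortedRot, List.length_mergeSort, List.length_finRange]

/-- The Burrows–Wheeler transform of (the necklace of) `w`: the `m`-th letter is the
last letter of the `m`-th cyclic rotation of `w` in ascending lexicographic order.
The last letter of the rotation starting at `j` is `w ((j + n - 1) % n)`. -/
def bwt {n k : ℕ} (w : Fin n → Fin k) : Fin n → Fin k :=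
  fun m =>
    let j : Fin n := (sortedRot w)[m.val]'(by rw [length_sortedRot]; exact m.isLt)
    w ⟨(j.val + (n - 1)) % n, Nat.mod_lt _ m.pos⟩

/-- A word is completely unclustered if no two consecutive letters are equal. -/
def Unclustered {n k : ℕ} (v : Fin n → Fin k) : Prop :=
  ∀ (i : ℕ) (h : i + 1 < n), v ⟨i, Nat.lt_of_succ_lt h⟩ ≠ v ⟨i + 1, h⟩

/-- The position `k * b + i` inside a word of length `k * n`, i.e. position `i` of block `b`. -/
def blockIdx {k n : ℕ} (b : Fin n) (i : Fin k) : Fin (k * n) :=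
  ⟨k * b.val + i.val, by
    have hb : b.val + 1 ≤ n := b.isLt
    have hi : i.val < k := i.isLt
    have h1 : k * (b.val + 1) ≤ k * n := Nat.mul_le_mul_left k hb
    have h2 : k * (b.val + 1) = k * b.val + k := by ring
    omega⟩

/-- A word of length `k * n` is an alphabet-permutation power if each of its `n`
consecutive blocks of length `k` contains every letter of the alphabet. -/
def IsAlphaPermPower {k n : ℕ} (v : Fin (k * n) → Fin k) : Prop :=
  ∀ b : Fin n, Function.Surjective fun i : Fin k => v (blockIdx b i)

/-- An alphabet-permutation power `v` of length `k * n` has a tie at block `i`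
if `v (k*i + k - 1) = v (k*(i+1))`. -/
def TieAt {k n : ℕ} (v : Fin (k * n) → Fin k) (i : ℕ) : Prop :=
  ∃ (h1 : k * i + (k - 1) < k * n) (h2 : k * (i + 1) < k * n),
    v ⟨k * i + (k - 1), h1⟩ = v ⟨k * (i + 1), h2⟩

/-- `π` is the standard permutation of the word `w`. -/
def IsStdPerm {n k : ℕ} (w : Fin n → Fin k) (π : Equiv.Perm (Fin n)) : Prop :=
  ∀ i j : Fin n, π i < π j ↔ (w i < w j ∨ (w i = w j ∧ i < j))

/-- A word is primitive iff it is fixed by no nontrivial cyclic rotation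
(equivalently, it is not a proper power). -/
def IsPrimitiveWord {n k : ℕ} (w : Fin n → Fin k) : Prop :=
  ∀ j : Fin n, rotl w j = w → j.val = 0

/-- The circular factor of length `n` of `w` starting at position `p`. -/
def circFactor {N k : ℕ} (w : Fin N → Fin k) (p : Fin N) (n : ℕ) : Fin n → Fin k :=
  fun t => w ⟨(p.val + t.val) % N, Nat.mod_lt _ p.pos⟩

/-- A de Bruijn word of order `n` over `Σ_k`: every word of length `n` occurs
exactly once as a circular factor. -/
def IsDeBruijn (k n : ℕ) (w : Fin (k ^ n) → Fin k) : Prop :=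
  ∀ f : Fin n → Fin k, ∃! p : Fin (k ^ n), circFactor w p n = f

/-- Cyclic successor of an index. -/
def nextIdx {N : ℕ} (i : Fin N) : Fin N := ⟨(i.val + 1) % N, Nat.mod_lt _ i.pos⟩

/-- A Hamiltonian cycle of the graph on `V` with edge set `E`, given as a cyclic
arrangement of all vertices. -/
def IsHamCycle {V : Type*} [Fintype V] (E : Set (V × V))
    (γ : Fin (Fintype.card V) → V) : Prop :=
  Function.Bijective γ ∧ ∀ i, (γ i, γ (nextIdx i)) ∈ E

/-- The Hamiltonian cycle `γ` visits the edge `e`. -/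
def Visits {V : Type*} [Fintype V] (γ : Fin (Fintype.card V) → V) (e : V × V) : Prop :=
  ∃ i, γ i = e.1 ∧ γ (nextIdx i) = e.2

/-! ### Rotations and the Burrows–Wheeler transform -/

lemma lexLe_iff {N k : ℕ} (f g : Fin N → Fin k) : LexLe f g ↔ toLex f ≤ toLex g := by
  rw [le_iff_eq_or_lt]
  rfl

/-- `sortPerm u m` is the starting position of the rotation of rank `m`, so its inverse sends a
starting position to a rank. -/
noncomputable def sortPerm {N k : ℕ} (u : Fin N → Fin k) : Equiv.Perm (Fin N) :=
  Equiv.ofBijective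
    (fun m => (sortedRot u)[m.val]'(by rw [length_sortedRot]; exact m.isLt)) <| by
    refine Finite.injective_iff_bijective.mp fun a b h => ?_
    have hnd : (sortedRot u).Nodup :=
      (List.mergeSort_perm _ _).nodup_iff.mpr (List.nodup_finRange N)
    exact Fin.ext ((hnd.getElem_inj_iff).mp h)

lemma monotone_sortPerm {N k : ℕ} (u : Fin N → Fin k) :
    Monotone fun m => toLex (rotl u (sortPerm u m)) := by
  intro a b hab
  rcases hab.eq_or_lt with rfl | hlt
  · exact le_rfl
  have hs : (sortedRot u).Pairwise
      (fun a b => decide (LexLe (rotl u a) (rotl u b)) = true) := by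
    refine List.pairwise_mergeSort ?_ ?_ _
    · intro a b c h1 h2
      simp only [decide_eq_true_eq, lexLe_iff] at *
      exact h1.trans h2
    · intro a b
      simp only [Bool.or_eq_true, decide_eq_true_eq, lexLe_iff]
      exact le_total _ _
  have := List.pairwise_iff_getElem.mp hs a b (by rw [length_sortedRot]; exact a.isLt)
    (by rw [length_sortedRot]; exact b.isLt) hlt
  rw [decide_eq_true_eq, lexLe_iff] at this
  exact this

/-- Cyclic predecessor of an index, written as in `bwt`. -/
def prevIdx {N : ℕ} (j : Fin N) : Fin N := ⟨(j.val + (N - 1)) % N, Nat.mod_lt _ j.pos⟩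

lemma bwt_apply {N k : ℕ} (u : Fin N → Fin k) (m : Fin N) :
    bwt u m = u (prevIdx (sortPerm u m)) := rfl

lemma prevIdx_val {N : ℕ} (j : Fin N) :
    (prevIdx j).val = if j.val = 0 then N - 1 else j.val - 1 := by
  have := j.isLt
  simp only [prevIdx]
  split_ifs with h
  · rw [h, Nat.zero_add, Nat.mod_eq_of_lt (by omega)]
  · rw [show j.val + (N - 1) = (j.val - 1) + N by omega, Nat.add_mod_right,
      Nat.mod_eq_of_lt (by omega)]

lemma nextIdx_prevIdx {N : ℕ} (j : Fin N) : nextIdx (prevIdx j) = j := by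
  have := j.isLt
  apply Fin.ext
  simp only [nextIdx, prevIdx_val]
  split_ifs with h
  · rw [show N - 1 + 1 = N by omega, Nat.mod_self, h]
  · rw [show j.val - 1 + 1 = j.val by omega, Nat.mod_eq_of_lt (by omega)]

lemma rotl_last {N k : ℕ} (u : Fin N → Fin k) (j : Fin N) (i : Fin N) (hi : i.val = N - 1) :
    rotl u j i = u (prevIdx j) := by
  simp only [rotl]
  congr 1
  apply Fin.ext
  simp only [Fin.val_add, prevIdx, hi, Nat.add_comm]

lemma rotl_prevIdx_zero {N k : ℕ} (u : Fin N → Fin k) (j : Fin N) (i : Fin N) (hi : i.val = 0) :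
    rotl u (prevIdx j) i = u (prevIdx j) := by
  simp only [rotl]
  congr 1
  apply Fin.ext
  rw [Fin.val_add, hi, Nat.zero_add, Nat.mod_eq_of_lt (prevIdx j).isLt]

lemma rotl_prevIdx_succ {N k : ℕ} (u : Fin N → Fin k) (j : Fin N) (i i' : Fin N)
    (hi : i'.val = i.val + 1) : rotl u (prevIdx j) i' = rotl u j i := by
  simp only [rotl]
  congr 1
  have h := j.isLt
  apply Fin.ext
  rw [Fin.val_add, Fin.val_add, hi, prevIdx, Nat.add_mod_mod,
    show i.val + 1 + (j.val + (N - 1)) = i.val + j.val + N by omega, Nat.add_mod_right]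

lemma rotl_prevIdx_lt_of_lt {N k : ℕ} (u : Fin N → Fin k) (j j' : Fin N)
    (h : u (prevIdx j) < u (prevIdx j')) :
    toLex (rotl u (prevIdx j)) < toLex (rotl u (prevIdx j')) := by
  refine ⟨⟨0, j.pos⟩, fun i hi => absurd hi (Nat.not_lt_zero _), ?_⟩
  change rotl u (prevIdx j) _ < rotl u (prevIdx j') _
  rwa [rotl_prevIdx_zero _ _ _ rfl, rotl_prevIdx_zero _ _ _ rfl]

lemma rotl_prevIdx_lt_of_eq {N k : ℕ} (u : Fin N → Fin k) (j j' : Fin N)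
    (h : u (prevIdx j) = u (prevIdx j')) (hlt : toLex (rotl u j) < toLex (rotl u j')) :
    toLex (rotl u (prevIdx j)) < toLex (rotl u (prevIdx j')) := by
  obtain ⟨i, hi, hlt⟩ := hlt
  change ∀ t < i, rotl u j t = rotl u j' t at hi
  change rotl u j i < rotl u j' i at hlt
  -- The rotations differ before their last letter, since these letters agree.
  have hiN : i.val + 1 < N := by
    by_contra hcon
    have hl : i.val = N - 1 := by have := i.isLt; omega
    rw [rotl_last u j i hl, rotl_last u j' i hl, h] at hlt
    exact lt_irrefl _ hlt
  refine ⟨⟨i.val + 1, hiN⟩, fun t ht => ?_, ?_⟩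
  · change rotl u (prevIdx j) t = rotl u (prevIdx j') t
    rcases Nat.eq_zero_or_pos t.val with h0 | h0
    · rw [rotl_prevIdx_zero _ _ _ h0, rotl_prevIdx_zero _ _ _ h0, h]
    · have ht' : t.val < i.val + 1 := ht
      have e : t.val = (⟨t.val - 1, by omega⟩ : Fin N).val + 1 := by simp only; omega
      rw [rotl_prevIdx_succ u j _ t e, rotl_prevIdx_succ u j' _ t e]
      exact hi _ (Fin.lt_def.mpr (by simp only; omega))
  · change rotl u (prevIdx j) _ < rotl u (prevIdx j') _
    rwa [rotl_prevIdx_succ u j i _ rfl, rotl_prevIdx_succ u j' i _ rfl]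

/-! ### The inverse standard permutation as multiplication by `k` -/

/-- The inverse of the standard permutation of `αⁿ`: the `q`-th smallest letter of `αⁿ`
(ties broken by position) is `q / n`, and stands at position `shiftMul k n q`. -/
def shiftMul (k n q : ℕ) : ℕ := k * (q % n) + (k - 1 - q / n)

section shiftMul

variable {k n q : ℕ}

lemma div_lt_of_lt_mul' (h : q < k * n) : q / n < k :=
  Nat.div_lt_of_lt_mul (by rwa [Nat.mul_comm])

lemma shiftMul_lt (h : q < k * n) : shiftMul k n q < k * n := by
  have h1 := div_lt_of_lt_mul' h
  have hn : 0 < n := Nat.pos_of_ne_zero (by rintro rfl; simp at h)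
  have h2 : k * (q % n + 1) ≤ k * n := Nat.mul_le_mul_left k (Nat.mod_lt q hn)
  rw [Nat.mul_add] at h2
  unfold shiftMul
  generalize q / n = a at *
  omega

lemma shiftMul_mod (h : q < k * n) : k - 1 - shiftMul k n q % k = q / n := by
  have h1 := div_lt_of_lt_mul' h
  rw [shiftMul]
  generalize q / n = a at *
  rw [Nat.mul_add_mod, Nat.mod_eq_of_lt (by omega)]
  omega

lemma shiftMul_cast (h : q < k * n) :
    ((shiftMul k n q + 1 : ℕ) : ZMod (k * n + 1)) = k * ((q + 1 : ℕ) : ZMod (k * n + 1)) := by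
  have h1 := div_lt_of_lt_mul' h
  have key : shiftMul k n q + 1 + (q / n) * (k * n + 1) = k * (q + 1) := by
    have h2 := Nat.div_add_mod q n
    obtain ⟨c, hc⟩ : ∃ c, k = q / n + 1 + c := ⟨k - (q / n + 1), by omega⟩
    have h3 : k - 1 - q / n = c := by omega
    rw [shiftMul, h3]
    generalize q / n = a at *
    generalize q % n = b at *
    subst h2 hc
    ring
  have := congrArg (Nat.cast : ℕ → ZMod (k * n + 1)) key
  rw [Nat.cast_add, Nat.cast_mul (q / n), ZMod.natCast_self, mul_zero, add_zero,
    Nat.cast_mul] at this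
  exact this

lemma shiftMul_lt_shiftMul {q' : ℕ} (hk : 0 < k) (h : q < q') (he : q / n = q' / n) :
    shiftMul k n q < shiftMul k n q' := by
  have h1 := Nat.div_add_mod q n
  have h2 := Nat.div_add_mod q' n
  rw [he] at h1
  have h3 : q % n < q' % n := by omega
  have := Nat.mul_lt_mul_of_pos_left h3 hk
  unfold shiftMul
  rw [he]
  omega

end shiftMul

/-! ### From a Burrows–Wheeler image to a primitive root -/

/-- The sorted rotations are pairwise distinct, since equal neighbours in the sorted list would
yield equal neighbouring letters of the transform. -/
lemma strictMono_sortPerm {N k : ℕ} (u : Fin N → Fin k) (hu : Unclustered (bwt u)) :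
    StrictMono fun m => toLex (rotl u (sortPerm u m)) := by
  rcases N with _ | N
  · exact fun a => a.elim0
  refine Fin.strictMono_iff_lt_succ.mpr fun i => ?_
  refine (monotone_sortPerm u (Fin.castSucc_lt_succ (i := i)).le).lt_of_ne fun he => ?_
  refine hu i.val (Nat.succ_lt_succ i.isLt) ?_
  have he' : rotl u (sortPerm u i.castSucc) = rotl u (sortPerm u i.succ) := toLex.injective he
  have := congrFun he' (Fin.last N)
  rw [rotl_last _ _ _ rfl, rotl_last _ _ _ rfl] at this
  exact this

/-- In terms of ranks, moving the start of a rotation one place forward is `shiftMul`. -/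
lemma sortPerm_shiftMul {k n : ℕ} (hk : 2 ≤ k) (u v : Fin (k * n) → Fin k)
    (hv : ∀ m : Fin (k * n), (v m).val = k - 1 - m.val % k) (hu : bwt u = v) (q : Fin (k * n)) :
    sortPerm u ⟨shiftMul k n q, shiftMul_lt q.isLt⟩ = nextIdx (sortPerm u q) := by
  have hcl : Unclustered (bwt u) := by
    intro i hi he
    rw [hu] at he
    have he := congrArg Fin.val he
    rw [hv, hv] at he
    have h1 : i % k < k := Nat.mod_lt _ (by omega)
    have h2 : (i + 1) % k < k := Nat.mod_lt _ (by omega)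
    simp only at he
    have h3 : i % k = (i + 1) % k := by omega
    have h4 : (i + 1) % k = (i % k + 1) % k := (Nat.mod_add_mod i k 1).symm
    rcases Nat.lt_or_ge (i % k + 1) k with h5 | h5
    · rw [Nat.mod_eq_of_lt h5] at h4; omega
    · rw [show i % k + 1 = k by omega, Nat.mod_self] at h4; omega
  have hsm := strictMono_sortPerm u hcl
  let ρ : Fin (k * n) → Fin (k * n) := fun q => ⟨shiftMul k n q, shiftMul_lt q.isLt⟩
  have hvρ (q : Fin (k * n)) : (u (prevIdx (sortPerm u (ρ q)))).val = q.val / n := by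
    rw [← bwt_apply u, hu, hv]
    exact shiftMul_mod q.isLt
  let τ : Fin (k * n) → Fin (k * n) := fun q => (sortPerm u).symm (prevIdx (sortPerm u (ρ q)))
  have hτ : StrictMono τ := by
    intro a b hab
    rw [← hsm.lt_iff_lt]
    simp only [τ, Equiv.apply_symm_apply]
    rcases (Nat.div_le_div_right (c := n) hab.le).lt_or_eq with hlt | heq
    · exact rotl_prevIdx_lt_of_lt _ _ _ (by rw [Fin.lt_def, hvρ, hvρ]; exact hlt)
    · exact rotl_prevIdx_lt_of_eq _ _ _ (Fin.ext (by rw [hvρ, hvρ]; exact heq))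
        (hsm (shiftMul_lt_shiftMul (by omega) hab heq))
  -- A strictly increasing self-map of a finite chain is the identity.
  have hid : τ = id := by
    have h := Tuple.unique_monotone (f := (id : Fin (k * n) → Fin (k * n)))
      (σ := Equiv.ofBijective τ (Finite.injective_iff_bijective.mp hτ.injective)) (τ := 1)
      hτ.monotone monotone_id
    exact h
  have h := congrFun hid q
  have h' : prevIdx (sortPerm u (ρ q)) = sortPerm u q := by
    rw [← Equiv.symm_apply_eq]; exact h
  rw [← h', nextIdx_prevIdx]

/-- If every nonzero residue is a power of `k`, then the modulus is prime and `k` is a primitive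
root. -/
lemma prime_and_orderOf_of_pow {k n : ℕ} (hk : 2 ≤ k) (hn : 1 ≤ n)
    (h : ∀ m < k * n, ∃ t : ℕ, ((m + 1 : ℕ) : ZMod (k * n + 1)) = (k : ZMod (k * n + 1)) ^ t) :
    Nat.Prime (k * n + 1) ∧ orderOf ((k : ℕ) : ZMod (k * n + 1)) = k * n := by
  have hN : 2 ≤ k * n := by nlinarith
  have hcop : Nat.Coprime k (k * n + 1) := by simp
  have hunit : IsUnit ((k : ℕ) : ZMod (k * n + 1)) := (ZMod.isUnit_iff_coprime _ _).mpr hcop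
  have hp : Nat.Prime (k * n + 1) := by
    refine Nat.prime_of_coprime _ (by omega) fun m hm hm0 => ?_
    obtain ⟨t, ht⟩ := h (m - 1) (by omega)
    rw [show m - 1 + 1 = m by omega] at ht
    have : IsUnit ((m : ℕ) : ZMod (k * n + 1)) := ht ▸ hunit.pow t
    exact ((ZMod.isUnit_iff_coprime _ _).mp this).symm
  refine ⟨hp, ?_⟩
  have : Fact (Nat.Prime (k * n + 1)) := ⟨hp⟩
  have hpow : ((k : ℕ) : ZMod (k * n + 1)) ^ (k * n) = 1 := ZMod.pow_card_sub_one_eq_one hunit.ne_zero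
  have hfin : 0 < orderOf ((k : ℕ) : ZMod (k * n + 1)) :=
    orderOf_pos_iff.mpr (isOfFinOrder_iff_pow_eq_one.mpr ⟨k * n, by omega, hpow⟩)
  refine le_antisymm (orderOf_le_of_pow_eq_one (by omega) hpow) ?_
  have hsub : (Finset.univ.erase (0 : ZMod (k * n + 1))) ⊆
      (Finset.range (orderOf ((k : ℕ) : ZMod (k * n + 1)))).image
        (fun t => ((k : ℕ) : ZMod (k * n + 1)) ^ t) := by
    intro x hx
    have hx0 : x ≠ 0 := (Finset.mem_erase.mp hx).1
    have hv0 : x.val ≠ 0 := by rwa [Ne, ZMod.val_eq_zero]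
    have hvl : x.val < k * n + 1 := ZMod.val_lt x
    obtain ⟨t, ht⟩ := h (x.val - 1) (by omega)
    rw [show x.val - 1 + 1 = x.val by omega, ZMod.natCast_zmod_val] at ht
    refine Finset.mem_image.mpr ⟨t % orderOf ((k : ℕ) : ZMod (k * n + 1)),
      Finset.mem_range.mpr (Nat.mod_lt _ hfin), ?_⟩
    rw [ht]
    exact pow_mod_orderOf _ _
  have := (Finset.card_le_card hsub).trans Finset.card_image_le
  rwa [Finset.card_erase_of_mem (Finset.mem_univ _), Finset.card_univ, ZMod.card,
    Finset.card_range, Nat.add_sub_cancel] at this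

lemma pow_of_bwt {k n : ℕ} (hk : 2 ≤ k) (u v : Fin (k * n) → Fin k)
    (hv : ∀ m : Fin (k * n), (v m).val = k - 1 - m.val % k) (hu : bwt u = v)
    (m : ℕ) (hm : m < k * n) :
    ∃ t : ℕ, ((m + 1 : ℕ) : ZMod (k * n + 1)) = (k : ZMod (k * n + 1)) ^ t := by
  have hN : 0 < k * n := by omega
  -- Following `shiftMul` for `t` steps from rank `0` moves the starting position by `t`.
  have step (t : ℕ) : ∃ q : Fin (k * n),
      (sortPerm u q).val = ((sortPerm u ⟨0, hN⟩).val + t) % (k * n) ∧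
      ((q.val + 1 : ℕ) : ZMod (k * n + 1)) = (k : ZMod (k * n + 1)) ^ t := by
    induction t with
    | zero => exact ⟨⟨0, hN⟩, by rw [Nat.add_zero, Nat.mod_eq_of_lt (Fin.isLt _)], by simp⟩
    | succ t ih =>
      obtain ⟨q, h1, h2⟩ := ih
      refine ⟨⟨shiftMul k n q, shiftMul_lt q.isLt⟩, ?_, ?_⟩
      · rw [sortPerm_shiftMul hk u v hv hu q]
        simp only [nextIdx, h1, Nat.mod_add_mod, Nat.add_assoc]
      · rw [shiftMul_cast q.isLt, h2, pow_succ']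
  obtain ⟨q, h1, h2⟩ := step
    ((sortPerm u ⟨m, hm⟩).val + (k * n - (sortPerm u ⟨0, hN⟩).val))
  have hq : q = ⟨m, hm⟩ := by
    apply (sortPerm u).injective
    apply Fin.ext
    have h0 := (sortPerm u ⟨0, hN⟩).isLt
    rw [h1, show (sortPerm u ⟨0, hN⟩).val + ((sortPerm u ⟨m, hm⟩).val +
      (k * n - (sortPerm u ⟨0, hN⟩).val)) = (sortPerm u ⟨m, hm⟩).val + k * n by omega,
      Nat.add_mod_right, Nat.mod_eq_of_lt (Fin.isLt _)]
  subst hq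
  exact ⟨_, h2⟩

/-! ### From a primitive root to a Burrows–Wheeler preimage -/

/-- The residue of `k ^ t` modulo `k * n + 1`, lowered by one so as to lie in `0, …, k * n - 1`. -/
def powRank (k n t : ℕ) : ℕ := ((k : ZMod (k * n + 1)) ^ t).val - 1

section powRank

variable {k n : ℕ}

lemma powRank_spec (hN : 2 ≤ k * n) (t : ℕ) : powRank k n t < k * n ∧
    ((powRank k n t + 1 : ℕ) : ZMod (k * n + 1)) = (k : ZMod (k * n + 1)) ^ t := by
  have : Fact (1 < k * n + 1) := ⟨by omega⟩
  have hunit : IsUnit ((k : ZMod (k * n + 1)) ^ t) :=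
    ((ZMod.isUnit_iff_coprime _ _).mpr (by simp)).pow t
  have h0 : ((k : ZMod (k * n + 1)) ^ t).val ≠ 0 := by
    rw [Ne, ZMod.val_eq_zero]; exact hunit.ne_zero
  have hl : ((k : ZMod (k * n + 1)) ^ t).val < k * n + 1 := ZMod.val_lt _
  refine ⟨by unfold powRank; omega, ?_⟩
  rw [powRank, Nat.sub_add_cancel (by omega), ZMod.natCast_zmod_val]

lemma powRank_succ (hN : 2 ≤ k * n) (t : ℕ) :
    powRank k n (t + 1) = shiftMul k n (powRank k n t) := by
  obtain ⟨h1, h2⟩ := powRank_spec hN t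
  have h3 := shiftMul_lt h1
  have h4 := shiftMul_cast h1
  rw [h2, ← pow_succ'] at h4
  rw [powRank, ← h4, ZMod.val_natCast, Nat.mod_eq_of_lt (by omega), Nat.add_sub_cancel]

lemma powRank_mod (ho : orderOf ((k : ℕ) : ZMod (k * n + 1)) = k * n) (t : ℕ) :
    powRank k n (t % (k * n)) = powRank k n t := by
  have h := pow_mod_orderOf ((k : ℕ) : ZMod (k * n + 1)) t
  rw [ho] at h
  rw [powRank, h, powRank]

end powRank

lemma exists_bwt {k n : ℕ} (hk : 2 ≤ k) (hn : 1 ≤ n) (v : Fin (k * n) → Fin k)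
    (hv : ∀ m : Fin (k * n), (v m).val = k - 1 - m.val % k)
    (ho : orderOf ((k : ℕ) : ZMod (k * n + 1)) = k * n) :
    ∃ u : Fin (k * n) → Fin k, bwt u = v := by
  have hN : 2 ≤ k * n := by nlinarith
  let u : Fin (k * n) → Fin k := fun j =>
    ⟨powRank k n j / n, div_lt_of_lt_mul' (powRank_spec hN j).1⟩
  let r : Fin (k * n) → Fin (k * n) := fun j => ⟨powRank k n j, (powRank_spec hN j).1⟩
  have hr : Function.Injective r := by
    intro a b hab
    have hab : powRank k n a = powRank k n b := congrArg Fin.val hab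
    have h : (k : ZMod (k * n + 1)) ^ a.val = (k : ZMod (k * n + 1)) ^ b.val := by
      rw [← (powRank_spec hN a).2, ← (powRank_spec hN b).2, hab]
    exact Fin.ext (pow_injOn_Iio_orderOf (by rw [ho]; exact a.isLt) (by rw [ho]; exact b.isLt) h)
  let e : Equiv.Perm (Fin (k * n)) := Equiv.ofBijective r (Finite.injective_iff_bijective.mp hr)
  have hrot (j i : Fin (k * n)) : (rotl u j i).val = powRank k n (j + i) / n := by
    simp only [rotl, u, Fin.val_add]
    rw [powRank_mod ho, Nat.add_comm]
  have hlex (j j' : Fin (k * n)) (hlt : r j < r j') :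
      toLex (rotl u j) ≤ toLex (rotl u j') := by
    by_contra! hcon
    obtain ⟨i, hi, hlt'⟩ := hcon
    change ∀ t < i, rotl u j' t = rotl u j t at hi
    change rotl u j' i < rotl u j i at hlt'
    have hind (t : ℕ) (ht : t ≤ i.val) : powRank k n (j + t) < powRank k n (j' + t) := by
      induction t with
      | zero => exact hlt
      | succ t ih =>
        have hq := congrArg Fin.val (hi ⟨t, by omega⟩ (Fin.lt_def.mpr (by simp only; omega)))
        rw [hrot, hrot] at hq
        rw [← Nat.add_assoc, ← Nat.add_assoc, powRank_succ hN, powRank_succ hN]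
        exact shiftMul_lt_shiftMul (by omega) (ih (by omega)) hq.symm
    have := Nat.div_le_div_right (c := n) (hind i.val le_rfl).le
    rw [Fin.lt_def, hrot, hrot] at hlt'
    omega
  have hmono : Monotone fun m => toLex (rotl u (e.symm m)) := by
    intro a b hab
    rcases hab.eq_or_lt with rfl | hlt
    · exact le_rfl
    refine hlex _ _ ?_
    change e (e.symm a) < e (e.symm b)
    rwa [Equiv.apply_symm_apply, Equiv.apply_symm_apply]
  -- Ties do not matter here: the sorted sequence of words is unique.
  have huniq : (fun j => toLex (rotl u j)) ∘ sortPerm u = (fun j => toLex (rotl u j)) ∘ e.symm :=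
    Tuple.unique_monotone (monotone_sortPerm u) hmono
  refine ⟨u, funext fun m => ?_⟩
  have hw : rotl u (sortPerm u m) = rotl u (e.symm m) := toLex.injective (congrFun huniq m)
  have hl := congrFun hw ⟨k * n - 1, by omega⟩
  rw [rotl_last _ _ _ rfl, rotl_last _ _ _ rfl] at hl
  rw [bwt_apply, hl]
  apply Fin.ext
  rw [hv]
  set j := prevIdx (e.symm m) with hj
  have hm : m = e (nextIdx j) := by rw [hj, nextIdx_prevIdx, Equiv.apply_symm_apply]
  have hmv : m.val = shiftMul k n (powRank k n j) := by
    rw [hm]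
    change powRank k n ((j.val + 1) % (k * n)) = _
    rw [powRank_mod ho, powRank_succ hN]
  rw [hmv, shiftMul_mod (powRank_spec hN j).1]

theorem stmt14 (k n : ℕ) (hk : 2 ≤ k) (hn : 1 ≤ n)
    (v : Fin (k * n) → Fin k) (hv : ∀ m : Fin (k * n), (v m).val = k - 1 - m.val % k) :
    (∃ u : Fin (k * n) → Fin k, bwt u = v) ↔
      (Nat.Prime (k * n + 1) ∧ orderOf ((k : ℕ) : ZMod (k * n + 1)) = k * n) := by
  constructor
  · rintro ⟨u, hu⟩
    exact prime_and_orderOf_of_pow hk hn (pow_of_bwt hk u v hv hu)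
  · rintro ⟨-, ho⟩
    exact exists_bwt hk hn v hv ho
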